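/- There exist coefficients (C_w)_{w∈Λ} with each C_w ∈ {0,1} and C_{0} > 0 (where 0 denotes the one-letter word 0) such that for every v ∈ Λ, 4·C_v ≤ min_{a ∈ (A∪{ε})\{l(v)}} Σ_{b∈A, vab ∈ S^{≤p}_free} C_{Λ(vab)}, where the minimum is over all a that are either the empty word ε or a letter of A different from the last letter l(v) of v (over all of A ∪ {ε} when v = ε), and the sum is over all letters b ∈ A such that vab contains no square of period at most 4 as a factor. -/

import Mathlib

open scoped Classical

/-- `w` contains a factor that is a square of period between `lo` and `hi`. -/
def HasSq {A : Type*} (lo hi : ℕ) (w : List A) : Prop :=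
  ∃ u : List A, lo ≤ u.length ∧ u.length ≤ hi ∧ (u ++ u) <:+: w

/-- `w` is a square of period between `lo` and `hi`. -/
def IsSq {A : Type*} (lo hi : ℕ) (w : List A) : Prop :=
  ∃ u : List A, lo ≤ u.length ∧ u.length ≤ hi ∧ w = u ++ u

/-- `w` is a minimal square of period between `lo` and `hi`: it is such a square and no
proper factor of it is such a square. -/
def MinSq {A : Type*} (lo hi : ℕ) (w : List A) : Prop :=
  IsSq lo hi w ∧ ∀ f : List A, f <:+: w → f ≠ w → ¬ IsSq lo hi f

/-- A word is normalized if it is lexicographically least among its images under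
permutations of the alphabet. -/
def Normalized {A : Type*} [LinearOrder A] (w : List A) : Prop :=
  ∀ π : Equiv.Perm A, ¬ List.Lex (· < ·) (w.map π) w

/-- `Λ`: the set of normalized words that are proper prefixes of minimal squares of
period between `lo` and `hi`. -/
def Lam {A : Type*} [LinearOrder A] (lo hi : ℕ) : Set (List A) :=
  {w | Normalized w ∧ ∃ s : List A, MinSq lo hi s ∧ w <+: s ∧ w ≠ s}

/-- `Λ(w)`: the longest element of `Λ` that is, up to a permutation of the alphabet,
a suffix of `w`. -/
noncomputable def lamOf {A : Type*} [LinearOrder A] (lo hi : ℕ) (w : List A) : List A :=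
  if h : ∃ v : List A,
      (v ∈ Lam lo hi ∧ ∃ π : Equiv.Perm A, v.map π <:+ w) ∧
      ∀ v' : List A, (v' ∈ Lam lo hi ∧ ∃ π : Equiv.Perm A, v'.map π <:+ w) →
        v'.length ≤ v.length
  then h.choose else []

/-!
Take for `C` the indicator function of a finite set `G ⊆ Λ`. The inequality then says that each
`v ∈ G`, followed by any admissible `a`, can be prolonged by at least four letters `b` so that `vab`
has no short square and `Λ(vab) ∈ G`, which is a finite verification once three notions are made
decidable:

* a word in which a letter occurs only after all smaller letters is normalized, since at the first
  place where a relabelling makes it smaller, the relabelling would identify two letters;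
* two words agree up to a permutation of a finite alphabet if and only if equal letters stand at the
  same places in both;
* every member of `Λ` has a period exceeding half its length, so `Λ(w)` is found as soon as the
  longest suffix of `w` with this property is the relabelling of a member of `Λ`.
-/

section Relabelling

variable {A : Type*}

theorem exists_perm_extending [Finite A] {s : Set (A × A)}
    (hs : ∀ p ∈ s, ∀ q ∈ s, p.1 = q.1 ↔ p.2 = q.2) :
    ∃ π : Equiv.Perm A, ∀ p ∈ s, π p.1 = p.2 := by
  have fst_injOn : s.InjOn Prod.fst := fun p hp q hq h ↦ Prod.ext h ((hs p hp q hq).1 h)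
  have snd_injOn : s.InjOn Prod.snd := fun p hp q hq h ↦ Prod.ext ((hs p hp q hq).2 h) h
  let e : Prod.fst '' s ≃ Prod.snd '' s :=
    (Equiv.Set.imageOfInjOn _ s fst_injOn).symm.trans (Equiv.Set.imageOfInjOn _ s snd_injOn)
  refine ⟨e.extendSubtype, fun p hp ↦ ?_⟩
  have fst_symm : (Equiv.Set.imageOfInjOn _ s fst_injOn).symm ⟨p.1, p, hp, rfl⟩ = ⟨p, hp⟩ :=
    (Equiv.symm_apply_eq _).2 rfl
  rw [e.extendSubtype_apply_of_mem p.1 ⟨p, hp, rfl⟩, Equiv.trans_apply, fst_symm]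
  rfl

/-- Two words have the same pattern if they have the same length and equal letters stand at the same
places in both. Over a finite alphabet this is equality up to a permutation of the letters, in a
form that does not quantify over permutations. -/
def SamePattern (v w : List A) : Prop :=
  v.length = w.length ∧ ∀ p ∈ v.zip w, ∀ q ∈ v.zip w, p.1 = q.1 ↔ p.2 = q.2

instance SamePattern.instDecidable [DecidableEq A] (v w : List A) : Decidable (SamePattern v w) :=
  inferInstanceAs (Decidable (_ ∧ _))

theorem SamePattern.exists_map_eq [Finite A] {v w : List A} (h : SamePattern v w) :
    ∃ π : Equiv.Perm A, v.map π = w := by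
  obtain ⟨hlen, hzip⟩ := h
  obtain ⟨π, hπ⟩ := exists_perm_extending (s := {p | p ∈ v.zip w}) hzip
  use π
  calc v.map π = ((v.zip w).map Prod.fst).map π := by rw [List.map_fst_zip hlen.le]
    _ = (v.zip w).map Prod.snd := by rw [List.map_map]; exact List.map_congr_left hπ
    _ = w := List.map_snd_zip hlen.ge

variable [LinearOrder A]

theorem Normalized.eq_of_map_eq_map {v w : List A} (hv : Normalized v) (hw : Normalized w)
    {π σ : Equiv.Perm A} (h : v.map π = w.map σ) : v = w := by
  have hvw : v.map (π.trans σ.symm) = w := by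
    simpa using congrArg (List.map σ.symm) h
  have hwv : w.map (σ.trans π.symm) = v := by
    simpa using (congrArg (List.map π.symm) h).symm
  exact le_antisymm (not_lt.1 fun hlt ↦ hv (π.trans σ.symm) (hvw.symm ▸ hlt))
    (not_lt.1 fun hlt ↦ hw (σ.trans π.symm) (hwv.symm ▸ hlt))

/-- Restricted growth: whenever a letter occurs, all smaller letters have occurred before it. -/
def IsRestrictedGrowth (w : List A) : Prop :=
  ∀ (i : ℕ) (hi : i < w.length), ∀ y < w[i], y ∈ w.take i

instance IsRestrictedGrowth.instDecidable [Fintype A] (w : List A) :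
    Decidable (IsRestrictedGrowth w) :=
  inferInstanceAs (Decidable (∀ (i : ℕ) (hi : i < w.length), ∀ y < w[i], y ∈ w.take i))

theorem IsRestrictedGrowth.normalized {w : List A} (hw : IsRestrictedGrowth w) :
    Normalized w := by
  intro π hlt
  rcases List.lt_iff_exists.1 hlt with ⟨-, hlen⟩ | ⟨i, _, hi, hfix, hdrop⟩
  · simp at hlen
  · simp only [List.getElem_map] at hfix hdrop
    obtain ⟨j, hj, hwj⟩ := List.mem_take_iff_getElem.1 (hw i hi _ hdrop)
    have hji : π w[j] = π w[i] := by rw [hfix j (by omega), hwj]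
    rw [← hwj, π.injective hji] at hdrop
    exact hdrop.false

end Relabelling

section Squares

variable {A : Type*} {lo hi : ℕ}

theorem hasSq_iff_exists_mem_tails {w : List A} :
    HasSq lo hi w ↔ ∃ t ∈ w.tails, ∃ n ∈ Finset.Icc lo hi,
      n ≤ t.length ∧ t.take n ++ t.take n <+: t := by
  constructor
  · rintro ⟨u, hlo, hhi, x, y, rfl⟩
    exact ⟨u ++ u ++ y, by simp, u.length, Finset.mem_Icc.2 ⟨hlo, hhi⟩, by simp, by simp⟩
  · rintro ⟨t, ht, n, hn, hnt, hsq⟩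
    have hlen : (t.take n).length = n := List.length_take_of_le hnt
    obtain ⟨hlo, hhi⟩ := Finset.mem_Icc.1 hn
    exact ⟨t.take n, hlen.symm ▸ hlo, hlen.symm ▸ hhi,
      hsq.isInfix.trans ((List.mem_tails ..).1 ht).isInfix⟩

theorem isInfix_tail_or_dropLast {f w : List A} (h : f <:+: w) (hne : f ≠ w) :
    f <:+: w.tail ∨ f <:+: w.dropLast := by
  obtain ⟨x, y, rfl⟩ := h
  rcases x with _ | ⟨a, x⟩
  · right
    have hy : y ≠ [] := by rintro rfl; simp at hne
    exact ⟨[], y.dropLast, by simp [List.dropLast_append_of_ne_nil hy]⟩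
  · exact .inl ⟨x, y, rfl⟩

theorem minSq_append_self {u : List A} (hu : u.length ∈ Finset.Icc lo hi)
    (htail : ¬ HasSq lo hi (u ++ u).tail) (hdropLast : ¬ HasSq lo hi (u ++ u).dropLast) :
    MinSq lo hi (u ++ u) := by
  obtain ⟨hlo, hhi⟩ := Finset.mem_Icc.1 hu
  refine ⟨⟨u, hlo, hhi, rfl⟩, ?_⟩
  rintro _ hf hne ⟨x, hx, hx', rfl⟩
  rcases isInfix_tail_or_dropLast hf hne with h | h
  · exact htail ⟨x, hx, hx', h⟩
  · exact hdropLast ⟨x, hx, hx', h⟩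

/-- The word has a period between `lo` and `hi` exceeding half its length, as does every proper
prefix of a square whose period lies in that range. -/
def HasLargePeriod (lo hi : ℕ) (w : List A) : Prop :=
  ∃ n ∈ Finset.Icc lo hi, w.length < 2 * n ∧ w.HasPeriod n

instance HasLargePeriod.instDecidable [DecidableEq A] (w : List A) :
    Decidable (HasLargePeriod lo hi w) :=
  inferInstanceAs (Decidable (∃ n ∈ Finset.Icc lo hi, w.length < 2 * n ∧ w <+: w.take n ++ w))

theorem HasLargePeriod.map {B : Type*} {w : List A} (h : HasLargePeriod lo hi w) (f : A → B) :
    HasLargePeriod lo hi (w.map f) := by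
  obtain ⟨n, hn, hlen, hper⟩ := h
  refine ⟨n, hn, by simpa using hlen, ?_⟩
  simpa [List.HasPeriod] using List.IsPrefix.map f hper

theorem hasPeriod_append_self (u : List A) : (u ++ u).HasPeriod u.length := by
  simp [List.HasPeriod]

/-- `v` is the pattern of a suffix of `w` at least as long as every suffix with a large period. For
`v ∈ Λ` this is a decidable certificate that `Λ(w) = v`. -/
def IsLongestPattern (lo hi : ℕ) (v w : List A) : Prop :=
  ∃ t ∈ w.tails, SamePattern v t ∧ ∀ t' ∈ w.tails, HasLargePeriod lo hi t' → t'.length ≤ t.length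

instance IsLongestPattern.instDecidable [DecidableEq A] (v w : List A) :
    Decidable (IsLongestPattern lo hi v w) :=
  inferInstanceAs (Decidable (∃ t ∈ w.tails, SamePattern v t ∧
    ∀ t' ∈ w.tails, HasLargePeriod lo hi t' → t'.length ≤ t.length))

end Squares

section Lam

variable {A : Type*} [LinearOrder A] {lo hi : ℕ}

theorem hasLargePeriod_of_mem_lam {v : List A} (hv : v ∈ Lam lo hi) : HasLargePeriod lo hi v := by
  obtain ⟨-, _, ⟨⟨u, hlo, hhi, rfl⟩, -⟩, hpre, hne⟩ := hv
  have hlt : v.length < (u ++ u).length :=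
    hpre.length_le.lt_of_ne fun h ↦ hne (hpre.eq_of_length h)
  refine ⟨u.length, Finset.mem_Icc.2 ⟨hlo, hhi⟩, ?_, (hasPeriod_append_self u).infix hpre.isInfix⟩
  rwa [List.length_append, ← two_mul] at hlt

theorem lamOf_eq_of_forall_length_le {v w : List A} {π : Equiv.Perm A} (hv : v ∈ Lam lo hi)
    (hsuf : v.map π <:+ w)
    (hmax : ∀ v' ∈ Lam lo hi, ∀ σ : Equiv.Perm A, v'.map σ <:+ w → v'.length ≤ v.length) :
    lamOf lo hi w = v := by
  have hex : ∃ v : List A, (v ∈ Lam lo hi ∧ ∃ π : Equiv.Perm A, v.map π <:+ w) ∧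
      ∀ v' : List A, (v' ∈ Lam lo hi ∧ ∃ π : Equiv.Perm A, v'.map π <:+ w) →
        v'.length ≤ v.length :=
    ⟨v, ⟨hv, π, hsuf⟩, fun v' ⟨hv', σ, hσ⟩ ↦ hmax v' hv' σ hσ⟩
  rw [lamOf, dif_pos hex]
  obtain ⟨⟨hmem, σ, hσ⟩, hlongest⟩ := hex.choose_spec
  have hlen : hex.choose.length = v.length :=
    (hmax _ hmem σ hσ).antisymm (hlongest v ⟨hv, π, hsuf⟩)
  refine hmem.1.eq_of_map_eq_map hv.1 (π := σ) (σ := π) ?_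
  rw [List.suffix_iff_eq_drop.1 hσ, List.suffix_iff_eq_drop.1 hsuf, List.length_map,
    List.length_map, hlen]

theorem IsLongestPattern.lamOf_eq [Finite A] {v w : List A} (h : IsLongestPattern lo hi v w)
    (hv : v ∈ Lam lo hi) : lamOf lo hi w = v := by
  obtain ⟨t, ht, hpattern, hmax⟩ := h
  obtain ⟨π, rfl⟩ := hpattern.exists_map_eq
  refine lamOf_eq_of_forall_length_le hv ((List.mem_tails ..).1 ht) fun v' hv' σ hσ ↦ ?_
  simpa using hmax _ ((List.mem_tails ..).2 hσ) ((hasLargePeriod_of_mem_lam hv').map σ)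

end Lam

theorem sum_ite_indicator_one {ι β R : Type*} [NonAssocSemiring R] (s : Finset ι) (p : ι → Prop)
    [DecidablePred p] (f : ι → β) (G : Set β) :
    ∑ i ∈ s, (if p i then G.indicator (1 : β → R) (f i) else 0) =
      ({i ∈ s | p i ∧ f i ∈ G}.card : R) := by
  simp only [Set.indicator_apply, Pi.one_apply, ← ite_and, Finset.sum_boole]

section Witness

/-- The support of the coefficients. It is the largest `G ⊆ Λ` whose indicator function satisfies
the inequalities, found by starting from the 19 words of `Λ` and discarding those that violate one;
the remaining words are stable after one round. -/
def coeffSupport : Finset (List (Fin 7)) :=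
  {[], [0], [0, 1], [0, 1, 2], [0, 1, 0, 2], [0, 1, 2, 0], [0, 1, 2, 3], [0, 1, 2, 1, 0],
    [0, 1, 2, 3, 0], [0, 1, 0, 2, 0, 1], [0, 1, 2, 3, 0, 1]}

/-- Roots of the minimal squares `uu` having the words of `coeffSupport` as prefixes. -/
def supportRoots : Finset (List (Fin 7)) :=
  {[0, 1], [0, 1, 2], [0, 1, 0, 2], [0, 1, 2, 1], [0, 1, 2, 3]}

-- Local, so that `HasSq` keeps its classical decision procedure in the final statement.
local instance HasSq.instDecidable {A : Type*} [DecidableEq A] (lo hi : ℕ) (w : List A) :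
    Decidable (HasSq lo hi w) :=
  decidable_of_iff _ hasSq_iff_exists_mem_tails.symm

theorem minSq_of_mem_supportRoots {u : List (Fin 7)} (hu : u ∈ supportRoots) :
    MinSq 1 4 (u ++ u) := by
  have certificate : ∀ u ∈ supportRoots, u.length ∈ Finset.Icc 1 4 ∧
      ¬ HasSq 1 4 (u ++ u).tail ∧ ¬ HasSq 1 4 (u ++ u).dropLast := by
    decide +kernel
  obtain ⟨hlen, htail, hdropLast⟩ := certificate u hu
  exact minSq_append_self hlen htail hdropLast

theorem mem_lam_of_mem_coeffSupport {v : List (Fin 7)} (hv : v ∈ coeffSupport) : v ∈ Lam 1 4 := by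
  have certificate : ∀ v ∈ coeffSupport, IsRestrictedGrowth v ∧
      ∃ u ∈ supportRoots, v <+: u ++ u ∧ v ≠ u ++ u := by
    decide +kernel
  obtain ⟨hgrowth, u, hu, hpre, hne⟩ := certificate v hv
  exact ⟨hgrowth.normalized, u ++ u, minSq_of_mem_supportRoots hu, hpre, hne⟩

theorem four_le_card_extensions_isLongestPattern : ∀ v ∈ coeffSupport, ∀ a : Option (Fin 7),
    v = [] ∨ a ≠ v.getLast? →
      4 ≤ Finset.card {b | ¬ HasSq 1 4 (v ++ a.toList ++ [b]) ∧
        ∃ g ∈ coeffSupport, IsLongestPattern 1 4 g (v ++ a.toList ++ [b])} := by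
  decide +kernel

end Witness

theorem four_le_card_extensions_lamOf_mem {v : List (Fin 7)} (hv : v ∈ coeffSupport)
    {a : Option (Fin 7)} (ha : v = [] ∨ a ≠ v.getLast?) :
    4 ≤ Finset.card {b | ¬ HasSq 1 4 (v ++ a.toList ++ [b]) ∧
      lamOf 1 4 (v ++ a.toList ++ [b]) ∈ coeffSupport} := by
  refine (four_le_card_extensions_isLongestPattern v hv a ha).trans (Finset.card_le_card ?_)
  intro b hb
  simp only [Finset.mem_filter_univ] at hb ⊢
  obtain ⟨hfree, g, hg, hpattern⟩ := hb
  exact ⟨hfree, (hpattern.lamOf_eq (mem_lam_of_mem_coeffSupport hg)).symm ▸ hg⟩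

/-- Over the alphabet `Fin 7` with `p = 4`, there exist coefficients `(C_w)_{w ∈ Λ}`
with values in `{0, 1}` and `C_[0] > 0` such that for every `v ∈ Λ` and every `a` that
is either the empty word or a letter different from the last letter of `v` (any `a`
when `v = ε`), `4·C_v ≤ Σ_{b, vab square-free of period ≤ 4} C_{Λ(vab)}`. -/
theorem stmt_13 :
    ∃ C : List (Fin 7) → ℝ,
      (∀ v ∈ Lam 1 4, C v = 0 ∨ C v = 1) ∧
      0 < C [0] ∧
      (∀ v ∈ Lam 1 4, ∀ a : Option (Fin 7), (v = [] ∨ a ≠ v.getLast?) →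
        4 * C v ≤
          ∑ b : Fin 7,
            if ¬ HasSq 1 4 (v ++ a.toList ++ [b]) then
              C (lamOf 1 4 (v ++ a.toList ++ [b]))
            else 0) := by
  refine ⟨(coeffSupport : Set _).indicator 1, fun v _ ↦ ?_, ?_, fun v _ a ha ↦ ?_⟩
  · exact Set.indicator_eq_zero_or_self _ 1 v
  · have zero_mem : [0] ∈ (coeffSupport : Set (List (Fin 7))) := by simp [coeffSupport]
    simp [Set.indicator_of_mem zero_mem]
  · rw [sum_ite_indicator_one]
    by_cases hv : v ∈ (coeffSupport : Set _)
    · rw [Set.indicator_of_mem hv, Pi.one_apply, mul_one]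
      exact_mod_cast four_le_card_extensions_lamOf_mem hv ha
    · rw [Set.indicator_of_notMem hv, mul_zero]
      exact Nat.cast_nonneg _
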